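/- Let R be a commutative noetherian ring and let M be a nonzero R-module of finite Gorenstein injective dimension g = Gid_R(M). Then g = sup{ depth(R_p) − width_{R_p}(M_p) : p a prime ideal of R }. More precisely: (a) for every prime ideal p of R with width_{R_p}(M_p) < ∞ one has depth(R_p) − width_{R_p}(M_p) ≤ g; and (b) there exists a prime ideal p of R with width_{R_p}(M_p) < ∞ and depth(R_p) − width_{R_p}(M_p) = g. -/

import Mathlib

/-!
Chouinard formula for Gorenstein injective dimension: if `M` is a nonzero `R`-module of
finite Gorenstein injective dimension `g`, then
`g = sup { depth R_p - width_{R_p} M_p : p prime }`. More precisely: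
(a) `depth R_p - width_{R_p} M_p ≤ g` for every prime `p` with `width_{R_p} M_p < ∞`, and
(b) some prime `p` has `width_{R_p} M_p < ∞` and `depth R_p - width_{R_p} M_p = g`.
-/

universe u

open CategoryTheory

/-- A witness that `J` is a Gorenstein injective `R`-module: an exact complex `I` of
injective `R`-modules (with differentials `d i : I (i+1) →ₗ[R] I i`) such that
`Hom_R(E, I)` is exact for every injective `R`-module `E`, together with an
isomorphism `J ≅ ker (I 0 → I (-1))`. -/
structure GorensteinInjectiveWitness (R : Type u) [CommRing R]
    (J : Type u) [AddCommGroup J] [Module R J] : Type (u + 1) where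
  I : ℤ → Type u
  [acg : ∀ i, AddCommGroup (I i)]
  [mod : ∀ i, Module R (I i)]
  inj : ∀ i, Module.Injective R (I i)
  d : ∀ i : ℤ, I (i + 1) →ₗ[R] I i
  d_comp_d : ∀ i : ℤ, (d i).comp (d (i + 1)) = 0
  exact : ∀ i : ℤ, LinearMap.ker (d i) = LinearMap.range (d (i + 1))
  hom_exact : ∀ (E : Type u) [AddCommGroup E] [Module R E], Module.Injective R E →
    ∀ (i : ℤ) (f : E →ₗ[R] I (i + 1)), (d i).comp f = 0 →
      ∃ g : E →ₗ[R] I (i + 1 + 1), (d (i + 1)).comp g = f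
  ker_iso : Nonempty (J ≃ₗ[R] LinearMap.ker (d (-1)))

/-- `J` is a Gorenstein injective `R`-module. -/
def IsGorensteinInjective (R : Type u) [CommRing R]
    (J : Type u) [AddCommGroup J] [Module R J] : Prop :=
  Nonempty (GorensteinInjectiveWitness R J)

/-- A witness for an exact sequence `0 → M → J⁰ → J¹ → ⋯ → Jⁿ → 0` with each `Jⁱ`
Gorenstein injective (modules beyond index `n` are trivial, which encodes that the
sequence stops at `Jⁿ`). -/
structure GidWitness (R : Type u) [CommRing R]
    (M : Type u) [AddCommGroup M] [Module R M] (n : ℕ) : Type (u + 1) where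
  J : ℕ → Type u
  [acg : ∀ i, AddCommGroup (J i)]
  [mod : ∀ i, Module R (J i)]
  gi : ∀ i ≤ n, IsGorensteinInjective R (J i)
  triv : ∀ i, n < i → Subsingleton (J i)
  ε : M →ₗ[R] J 0
  ε_inj : Function.Injective ε
  d : ∀ i : ℕ, J i →ₗ[R] J (i + 1)
  exact_zero : LinearMap.ker (d 0) = LinearMap.range ε
  exact : ∀ i : ℕ, LinearMap.ker (d (i + 1)) = LinearMap.range (d i)

/-- The Gorenstein injective dimension of a module: the least `n` admitting an exact
sequence `0 → M → J⁰ → ⋯ → Jⁿ → 0` of Gorenstein injective modules, as an element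
of `ℕ∞` (`⊤` if there is no such `n`). -/
noncomputable def gid (R : Type u) [CommRing R]
    (M : Type u) [AddCommGroup M] [Module R M] : ℕ∞ :=
  sInf {c : ℕ∞ | ∃ n : ℕ, c = n ∧ Nonempty (GidWitness R M n)}

/-- The depth of a noetherian local ring `A`: the supremum (in `ℕ∞`) of lengths of
`A`-regular sequences contained in the maximal ideal. -/
noncomputable def ringDepth (A : Type u) [CommRing A] [IsLocalRing A] : ℕ∞ :=
  sSup {c : ℕ∞ | ∃ rs : List A, c = rs.length ∧
    (∀ r ∈ rs, r ∈ IsLocalRing.maximalIdeal A) ∧ RingTheory.Sequence.IsRegular A rs}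

/-- The width of a module `N` over a local ring `A`:
`inf { i | Tor_i^A(k, N) ≠ 0 } ∈ ℕ∞`, where `k` is the residue field of `A`. -/
noncomputable def modWidth (A : Type u) [CommRing A] [IsLocalRing A]
    (N : Type u) [AddCommGroup N] [Module A N] : ℕ∞ :=
  sInf {c : ℕ∞ | ∃ i : ℕ, c = i ∧
    ¬ Subsingleton (((Tor (ModuleCat.{u} A) i).obj
      (ModuleCat.of A (IsLocalRing.ResidueField A))).obj (ModuleCat.of A N))}

/-!
Since `Torᵢ(k, N)` and `Extⁱ(N, k)` vanish together over a local ring with residue field `k`, the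
width of `N` is the range in which `Extⁱ(N, k)` vanishes. For injective `E`, applying `Hom(-, E)` to
multiplication by the members of a regular sequence shows that `Extⁱ(E, k) = 0` for `i < depth`.
Shifting dimensions along the exact sequences `0 → K → I → B → 0` that make up a Gorenstein
injective module `B`, and then along a Gorenstein injective resolution, gives
`depth R_p ≤ width M_p + g`.

For the attainment of the bound, take an approximation `0 → B → H → M → 0` with `B` Gorenstein
injective and `H` of injective dimension at most `g`. If the bound is attained nowhere, then
`Extⁱ(H_p, κ(p)) = 0` whenever `i + g ≤ depth R_p`. For `g ≥ 1`, passing to cosyzygies of `H`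
reduces to a sequence `0 → H → I → I' → 0` with `I`, `I'` injective for which
`Extᵈ(I'_p, κ(p)) → Extᵈ(I_p, κ(p))` is injective at `d = depth R_p`. Descending along a maximal
regular sequence, this makes `Hom(κ(p), I_p) → Hom(κ(p), I'_p)` surjective for every `p`, and
noetherian induction spreads surjectivity to `Hom(R/a, I) → Hom(R/a, I')` for all ideals `a`. By
Baer's criterion `H` is injective, so the Gorenstein injective dimension of `M` drops below `g`.
For `g = 0` the same argument, applied to two adjacent maps in a complete resolution of `M`, yields
`M = 0`.
-/

open Limits Abelian

open scoped ZeroObject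

section Extensions

universe w v₁ u₁

variable {C : Type u₁} [Category.{v₁} C] [Abelian C]

/-- `IsExtension K X Q` says that there is a short exact sequence `0 → K → X → Q → 0`; it is used
where only the existence of the sequence matters. -/
def IsExtension (K X Q : C) : Prop :=
  ∃ (f : K ⟶ X) (g : X ⟶ Q) (w : f ≫ g = 0), (ShortComplex.mk f g w).ShortExact

namespace IsExtension

variable {K X Q : C}

theorem of_shortExact {S : ShortComplex C} (hS : S.ShortExact) : IsExtension S.X₁ S.X₂ S.X₃ :=
  ⟨S.f, S.g, S.zero, hS⟩

theorem of_iso {K' X' Q' : C} (h : IsExtension K X Q) (eK : K ≅ K') (eX : X ≅ X') (eQ : Q ≅ Q') :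
    IsExtension K' X' Q' := by
  obtain ⟨f, g, w, hS⟩ := h
  refine ⟨eK.inv ≫ f ≫ eX.hom, eX.inv ≫ g ≫ eQ.hom, by simp [reassoc_of% w], ?_⟩
  exact ShortComplex.shortExact_of_iso (ShortComplex.isoMk eK eX eQ (by simp) (by simp)) hS

theorem of_epi (g : X ⟶ Q) [Epi g] : IsExtension (kernel g) X Q :=
  ⟨kernel.ι g, g, kernel.condition g, ⟨ShortComplex.exact_kernel g⟩⟩

theorem of_mono (f : K ⟶ X) [Mono f] : IsExtension K X (cokernel f) :=
  ⟨f, cokernel.π f, cokernel.condition f, ⟨ShortComplex.exact_cokernel f⟩⟩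

theorem zero_left (X : C) : IsExtension 0 X X :=
  (of_epi (𝟙 X)).of_iso (kernel.ofMono (𝟙 X)) (.refl X) (.refl X)

theorem op (h : IsExtension K X Q) :
    IsExtension (Opposite.op Q) (Opposite.op X) (Opposite.op K) := by
  obtain ⟨_, _, _, hS⟩ := h
  exact of_shortExact hS.op

theorem unop {K X Q : Cᵒᵖ} (h : IsExtension K X Q) : IsExtension Q.unop X.unop K.unop := by
  obtain ⟨_, _, _, hS⟩ := h
  exact of_shortExact hS.unop

theorem pullback_fst {Y : C} {f : K ⟶ X} {g : X ⟶ Q} {w : f ≫ g = 0}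
    (h : (ShortComplex.mk f g w).ShortExact) (t : Y ⟶ Q) :
    IsExtension K (pullback t g) Y := by
  have := h.mono_f
  have := h.epi_g
  let ι : K ⟶ pullback t g := pullback.lift 0 f (by simp [w])
  have hι₀ : ι ≫ pullback.fst t g = 0 := pullback.lift_fst ..
  have hι : ι ≫ pullback.snd t g = f := pullback.lift_snd ..
  have : Mono ι := mono_of_mono_fac hι
  refine ⟨ι, pullback.fst t g, hι₀, ⟨ShortComplex.exact_of_f_is_kernel _ <|
    KernelFork.IsLimit.ofι' _ _ fun k hk ↦ ⟨h.exact.lift (k ≫ pullback.snd t g) ?_, ?_⟩⟩⟩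
  · simp [← pullback.condition, reassoc_of% hk]
  · apply pullback.hom_ext
    · rw [Category.assoc, hι₀, comp_zero, hk]
    · rw [Category.assoc, hι]; exact h.exact.lift_f ..

theorem biprod_right (h : IsExtension K X Q) (Y : C) : IsExtension K (X ⊞ Y) (Q ⊞ Y) := by
  obtain ⟨f, g, w, hS⟩ := h
  have := hS.mono_f
  have := hS.epi_g
  refine ⟨f ≫ biprod.inl, biprod.map g (𝟙 Y), by simp [reassoc_of% w],
    ⟨ShortComplex.exact_of_f_is_kernel _ <| KernelFork.IsLimit.ofι' _ _ fun k hk ↦ ?_⟩⟩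
  have hk₁ : (k ≫ biprod.fst) ≫ g = 0 := by simpa using hk =≫ biprod.fst
  have hk₂ : k ≫ biprod.snd = 0 := by simpa using hk =≫ biprod.snd
  refine ⟨hS.exact.lift _ hk₁, ?_⟩
  apply biprod.hom_ext
  · simpa using hS.exact.lift_f _ hk₁
  · simp [hk₂]

theorem exists_of_common_quotient {K' X' : C} (h : IsExtension K X Q) (h' : IsExtension K' X' Q) :
    ∃ P, IsExtension K P X' ∧ IsExtension K' P X := by
  obtain ⟨f, g, w, hS⟩ := h
  obtain ⟨f', g', w', hS'⟩ := h'
  exact ⟨pullback g' g, pullback_fst hS g',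
    (pullback_fst hS' g).of_iso (.refl _) (pullbackSymmetry _ _) (.refl _)⟩

/-- The preimage of `M ⊆ Q` in `X`. -/
theorem exists_of_quotient {M R : C} (h : IsExtension K X Q) (h' : IsExtension M Q R) :
    ∃ P, IsExtension K P M ∧ IsExtension P X R := by
  obtain ⟨f, g, w, hS⟩ := h
  obtain ⟨f', g', w', hS'⟩ := h'
  have := hS'.mono_f
  have := hS'.epi_g
  have := hS.epi_g
  refine ⟨pullback f' g, pullback_fst hS f', pullback.snd f' g, g ≫ g', ?_, ⟨?_⟩⟩
  · simp [← pullback.condition_assoc, w']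
  · refine ShortComplex.exact_of_f_is_kernel _ (KernelFork.IsLimit.ofι' _ _ fun k hk ↦
      ⟨pullback.lift (hS'.exact.lift (k ≫ g) (by simpa using hk)) k (hS'.exact.lift_f ..), ?_⟩)
    exact pullback.lift_snd ..

theorem exists_of_sub {Y R : C} (h : IsExtension K X Q) (h' : IsExtension X Y R) :
    ∃ P, IsExtension K Y P ∧ IsExtension Q P R := by
  obtain ⟨P, h₁, h₂⟩ := h'.op.exists_of_quotient h.op
  exact ⟨P.unop, h₂.unop, h₁.unop⟩

theorem map {D : Type*} [Category* D] [Abelian D] (F : C ⥤ D) [F.PreservesZeroMorphisms]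
    [PreservesFiniteLimits F] [PreservesFiniteColimits F] (h : IsExtension K X Q) :
    IsExtension (F.obj K) (F.obj X) (F.obj Q) := by
  obtain ⟨_, _, _, hS⟩ := h
  exact of_shortExact (hS.map_of_exact F)

end IsExtension

theorem exists_shortExact_injective [EnoughInjectives C] (X : C) :
    ∃ S : ShortComplex C, S.ShortExact ∧ S.X₁ = X ∧ Injective S.X₂ :=
  ⟨.mk _ _ (cokernel.condition (Injective.ι X)), ⟨ShortComplex.exact_cokernel _⟩, rfl,
    Injective.injective_under X⟩

variable [HasExt.{w} C]

/-- `A` is orthogonal to the injective objects: `Extⁱ(E, A) = 0` for all injective `E` and all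
`i ≥ 1`. -/
def InjOrthogonal (A : C) : Prop :=
  ∀ (E : C) [Injective E] (i : ℕ), Subsingleton (Ext E A (i + 1))

namespace InjOrthogonal

variable {K X Q : C}

theorem of_injective (I : C) [Injective I] : InjOrthogonal I := fun _ _ _ ↦
  ⟨fun x y ↦ (x.eq_zero_of_injective).trans y.eq_zero_of_injective.symm⟩

theorem of_extension (h : IsExtension K X Q) (hK : InjOrthogonal K) (hQ : InjOrthogonal Q) :
    InjOrthogonal X := by
  obtain ⟨f, g, w, hS⟩ := h
  refine fun E _ i ↦ subsingleton_of_forall_eq 0 fun x ↦ ?_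
  have := hK E i
  have := hQ E i
  obtain ⟨y, rfl⟩ := Ext.covariant_sequence_exact₂ E hS x (Subsingleton.elim _ _)
  rw [Subsingleton.elim y 0, Ext.zero_comp]

theorem of_quotient (h : IsExtension K X Q) (hK : InjOrthogonal K) (hX : InjOrthogonal X) :
    InjOrthogonal Q := by
  obtain ⟨f, g, w, hS⟩ := h
  refine fun E _ i ↦ subsingleton_of_forall_eq 0 fun x ↦ ?_
  have := hK E (i + 1)
  have := hX E i
  obtain ⟨y, rfl⟩ := Ext.covariant_sequence_exact₃ E hS x rfl (Subsingleton.elim _ _)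
  rw [Subsingleton.elim y 0, Ext.zero_comp]

theorem exists_lift {S : ShortComplex C} (hS : S.ShortExact) (h₁ : InjOrthogonal S.X₁)
    {E : C} [Injective E] (t : E ⟶ S.X₃) : ∃ l : E ⟶ S.X₂, l ≫ S.g = t := by
  have := h₁ E 0
  obtain ⟨y, hy⟩ := Ext.covariant_sequence_exact₃ E hS (Ext.mk₀ t) rfl (Subsingleton.elim _ _)
  obtain ⟨l, rfl⟩ := (Ext.mk₀_bijective E S.X₂).2 y
  exact ⟨l, (Ext.mk₀_bijective E S.X₃).1 (by rwa [Ext.mk₀_comp_mk₀] at hy)⟩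

theorem nonempty_iso_biprod (h : IsExtension K X Q) (hK : InjOrthogonal K) [Injective Q] :
    Nonempty (X ≅ K ⊞ Q) := by
  obtain ⟨f, g, w, hS⟩ := h
  have := hS.mono_f
  have := hS.epi_g
  obtain ⟨s, hs⟩ := exists_lift hS hK (𝟙 Q)
  exact ⟨(ShortComplex.Splitting.ofExactOfSection _ hS.exact s hs hS.mono_f).isoBinaryBiproduct⟩

end InjOrthogonal

/-- Gorenstein injective objects, as the largest class of objects `B` orthogonal to the injectives
that sit in a short exact sequence `0 → K → I → B → 0` with `I` injective and `K` in the class.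
Only a left injective resolution has to be prescribed: any right injective resolution of `B` may be
spliced onto it, see `GorensteinInjectiveObject.of_extension_injective`. -/
def GorensteinInjectiveObject (A : C) : Prop :=
  ∃ P : ObjectProperty C, P A ∧
    ∀ B, P B → InjOrthogonal B ∧ ∃ K I, Injective I ∧ IsExtension K I B ∧ P K

namespace GorensteinInjectiveObject

variable {A B X : C}

theorem injOrthogonal (hA : GorensteinInjectiveObject A) : InjOrthogonal A :=
  let ⟨_, hPA, hP⟩ := hA
  (hP A hPA).1

theorem exists_injective_extension (hA : GorensteinInjectiveObject A) :
    ∃ K I, Injective I ∧ IsExtension K I A ∧ GorensteinInjectiveObject K :=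
  let ⟨P, hPA, hP⟩ := hA
  let ⟨K, I, hI, h, hK⟩ := (hP A hPA).2
  ⟨K, I, hI, h, P, hK, hP⟩

theorem of_injOrthogonal {K I : C} [Injective I] (hA : InjOrthogonal A) (h : IsExtension K I A)
    (hK : GorensteinInjectiveObject K) : GorensteinInjectiveObject A := by
  obtain ⟨P, hPK, hP⟩ := hK
  refine ⟨fun B ↦ P B ∨ B = A, .inr rfl, ?_⟩
  rintro B (hB | rfl)
  · obtain ⟨hB', K', I', hI', h', hK'⟩ := hP B hB
    exact ⟨hB', K', I', hI', h', .inl hK'⟩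
  · exact ⟨hA, K, I, ‹_›, h, .inl hPK⟩

theorem of_injective (I : C) [Injective I] : GorensteinInjectiveObject I := by
  refine ⟨fun B ↦ Injective B, ‹_›, fun B (hB : Injective B) ↦ ⟨.of_injective B, 0, B, hB,
    .zero_left B, show Injective (0 : C) from inferInstance⟩⟩

theorem of_extension_injective {I : C} [Injective I] (h : IsExtension A I B)
    (hA : GorensteinInjectiveObject A) : GorensteinInjectiveObject B :=
  of_injOrthogonal (.of_quotient h hA.injOrthogonal (.of_injective I)) h hA

/-- The kernel half of the horseshoe lemma. -/
theorem exists_extension_kernels {A P B A' IA B' IB : C} [Injective IB]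
    (h : IsExtension A P B) (hA : InjOrthogonal A) (h₁ : IsExtension A' IA A)
    (h₂ : IsExtension B' IB B) :
    ∃ K, IsExtension A' K B' ∧ IsExtension K (IA ⊞ IB) P := by
  obtain ⟨Z, hZ, hZ'⟩ := h.exists_of_common_quotient h₂
  obtain ⟨e⟩ := hA.nonempty_iso_biprod hZ
  exact ((h₁.biprod_right IB).of_iso (.refl _) (.refl _) e.symm).exists_of_quotient hZ'

theorem of_extension (h : IsExtension A X B) (hA : GorensteinInjectiveObject A)
    (hB : GorensteinInjectiveObject B) : GorensteinInjectiveObject X := by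
  refine ⟨fun P ↦ ∃ A B, GorensteinInjectiveObject A ∧ GorensteinInjectiveObject B ∧
    IsExtension A P B, ⟨A, B, hA, hB, h⟩, ?_⟩
  rintro P ⟨A, B, hA, hB, h⟩
  refine ⟨.of_extension h hA.injOrthogonal hB.injOrthogonal, ?_⟩
  obtain ⟨A', IA, _, h₁, hA'⟩ := hA.exists_injective_extension
  obtain ⟨B', IB, _, h₂, hB'⟩ := hB.exists_injective_extension
  obtain ⟨K, hK, hK'⟩ := exists_extension_kernels h hA.injOrthogonal h₁ h₂
  exact ⟨K, IA ⊞ IB, inferInstance, hK', A', B', hA', hB', hK⟩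

theorem of_iso (hA : GorensteinInjectiveObject A) (e : A ≅ B) : GorensteinInjectiveObject B :=
  have ⟨_, _, _, h, hK⟩ := hA.exists_injective_extension
  of_extension_injective (h.of_iso (.refl _) (.refl _) e) hK

end GorensteinInjectiveObject

/-- `GidLE n M` says that the Gorenstein injective dimension of `M` is at most `n`: there is an
exact sequence `0 → M → J⁰ → ⋯ → Jⁿ → 0` of Gorenstein injective objects, cut here into short exact
sequences. -/
def GidLE : ℕ → C → Prop
  | 0, M => GorensteinInjectiveObject M
  | n + 1, M => ∃ J K, GorensteinInjectiveObject J ∧ IsExtension M J K ∧ GidLE n K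

namespace GidLE

/-- The dual of the Auslander-Buchweitz approximation theorem. -/
theorem exists_approximation {n : ℕ} {M : C} (hM : GidLE n M) :
    ∃ B H, GorensteinInjectiveObject B ∧ HasInjectiveDimensionLE H n ∧ IsExtension B H M := by
  induction n generalizing M with
  | zero =>
    obtain ⟨B, H, hH, h, hB⟩ := hM.exists_injective_extension
    exact ⟨B, H, hB, (injective_iff_hasInjectiveDimensionLT_one).mp hH, h⟩
  | succ n ih =>
    obtain ⟨J, K, hJ, hMJK, hK⟩ := hM
    obtain ⟨B, H, hB, hH, hBHK⟩ := ih hK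
    obtain ⟨Z, hMZH, hBZJ⟩ := hMJK.exists_of_common_quotient hBHK
    obtain ⟨B', I, hI, hB'IZ, hB'⟩ := (hB.of_extension hBZJ hJ).exists_injective_extension
    obtain ⟨H', hB'H'M, f, g, w, hS⟩ := hB'IZ.exists_of_quotient hMZH
    exact ⟨B', H', hB', (hS.hasInjectiveDimensionLT_X₃_iff n hI).mp hH, hB'H'M⟩

theorem of_approximation [EnoughInjectives C] {n : ℕ} {B H M : C}
    (hB : GorensteinInjectiveObject B) (hH : HasInjectiveDimensionLE H n)
    (h : IsExtension B H M) : GidLE n M := by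
  induction n generalizing B H M with
  | zero =>
    have : Injective H := (injective_iff_hasInjectiveDimensionLT_one).mpr hH
    exact hB.of_extension_injective h
  | succ n ih =>
    obtain ⟨S, hS, rfl, _⟩ := exists_shortExact_injective H
    obtain ⟨J, hBIJ, hMJS⟩ := h.exists_of_sub (.of_shortExact hS)
    exact ⟨J, S.X₃, hB.of_extension_injective hBIJ, hMJS,
      ih (.of_injective 0) ((hS.hasInjectiveDimensionLT_X₃_iff n ‹_›).mpr hH) (.zero_left _)⟩

end GidLE

end Extensions

theorem exists_int_sequence {X : Type*} {r : X → X → Prop} (hl : ∀ x, ∃ y, r y x)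
    (hr : ∀ x, ∃ y, r x y) (n : ℤ) (x : X) : ∃ a : ℤ → X, a n = x ∧ ∀ i, r (a (i + 1)) (a i) := by
  choose l hl using hl
  choose s hr using hr
  let a : ℤ → X
    | .ofNat m => l^[m] x
    | .negSucc m => s^[m + 1] x
  have ha : ∀ i, r (a (i + 1)) (a i)
    | .ofNat m => by
      change r (l^[m + 1] x) (l^[m] x)
      rw [Function.iterate_succ_apply']
      exact hl _
    | .negSucc 0 => hr x
    | .negSucc (m + 1) => by
      change r (s^[m + 1] x) (s^[m + 1 + 1] x)
      rw [Function.iterate_succ_apply' s (m + 1)]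
      exact hr _
  exact ⟨fun i ↦ a (i - n), congrArg a (sub_self n), fun i ↦ by
    simpa only [sub_add_eq_add_sub] using ha (i - n)⟩

section Witnesses

variable {R : Type u} [CommRing R]

theorem isExtension_of_exact {A B C : Type u} [AddCommGroup A] [Module R A] [AddCommGroup B]
    [Module R B] [AddCommGroup C] [Module R C] {f : A →ₗ[R] B} {g : B →ₗ[R] C}
    (hf : Function.Injective f) (hfg : Function.Exact f g) (hg : Function.Surjective g) :
    IsExtension (ModuleCat.of R A) (ModuleCat.of R B) (ModuleCat.of R C) :=
  have w : ModuleCat.ofHom f ≫ ModuleCat.ofHom g = 0 :=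
    ModuleCat.hom_ext hfg.linearMap_comp_eq_zero
  .of_shortExact (ModuleCat.shortComplex_shortExact (.mk _ _ w) hfg hf hg)

theorem IsExtension.exists_linearMap {A B C : ModuleCat.{u} R} (h : IsExtension A B C) :
    ∃ (f : A →ₗ[R] B) (g : B →ₗ[R] C), Function.Injective f ∧ Function.Exact f g ∧
      Function.Surjective g := by
  obtain ⟨f, g, w, hS⟩ := h
  exact ⟨f.hom, g.hom, hS.moduleCat_injective_f,
    (ShortComplex.ShortExact.moduleCat_exact_iff_function_exact _).mp hS.exact,
    hS.moduleCat_surjective_g⟩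

namespace GorensteinInjectiveWitness

attribute [local instance] acg mod

variable {J : Type u} [AddCommGroup J] [Module R J] (W : GorensteinInjectiveWitness R J)

/-- The cycles of the complex `W.I`, as objects of the category of modules. -/
abbrev cycles (i : ℤ) : ModuleCat.{u} R := ModuleCat.of R (LinearMap.ker (W.d i))

/-- The short complex `0 → Zᵢ₊₁ → Iᵢ₊₂ → Zᵢ → 0` with `Zᵢ` the cycles of `W.I`. -/
abbrev cyclesSequence (i : ℤ) : ShortComplex (ModuleCat.{u} R) where
  X₁ := W.cycles (i + 1)
  X₂ := ModuleCat.of R (W.I (i + 1 + 1))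
  X₃ := W.cycles i
  f := ModuleCat.ofHom (LinearMap.ker (W.d (i + 1))).subtype
  g := ModuleCat.ofHom ((W.d (i + 1)).codRestrict _ fun x ↦ LinearMap.congr_fun (W.d_comp_d i) x)
  zero := by ext x; exact x.2

theorem cyclesSequence_shortExact (i : ℤ) : (W.cyclesSequence i).ShortExact := by
  refine ModuleCat.shortComplex_shortExact _ (fun x ↦ ?_) Subtype.val_injective ?_
  · exact ⟨fun hx ↦ ⟨⟨x, congrArg Subtype.val hx⟩, rfl⟩, fun ⟨y, hy⟩ ↦ hy ▸ Subtype.ext y.2⟩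
  · rintro ⟨y, hy⟩
    obtain ⟨x, rfl⟩ := (W.exact i).le hy
    exact ⟨x, rfl⟩

theorem exists_lift_cycles (i : ℤ) {E : ModuleCat.{u} R} [hE : Injective E] (t : E ⟶ W.cycles i) :
    ∃ l : E ⟶ ModuleCat.of R (W.I (i + 1 + 1)), l ≫ (W.cyclesSequence i).g = t := by
  obtain ⟨l, hl⟩ := W.hom_exact E ((Module.injective_iff_injective_object R E).mpr hE) i
    ((LinearMap.ker (W.d i)).subtype ∘ₗ t.hom) (by ext x; exact (t x).2)
  exact ⟨ModuleCat.ofHom l, by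
    ext x
    exact LinearMap.congr_fun hl x⟩

theorem injOrthogonal_cycles (i : ℤ) : InjOrthogonal (W.cycles i) := by
  intro E _ n
  induction n generalizing i with
  | zero =>
    obtain ⟨i, rfl⟩ : ∃ j, i = j + 1 := ⟨i - 1, by ring⟩
    refine subsingleton_of_forall_eq 0 fun x ↦ ?_
    have hS := W.cyclesSequence_shortExact i
    have : Injective (W.cyclesSequence i).X₂ :=
      (Module.injective_iff_injective_object R _).mp (W.inj _)
    obtain ⟨y, rfl⟩ := Ext.covariant_sequence_exact₁ E hS x (Ext.eq_zero_of_injective _) rfl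
    obtain ⟨t, rfl⟩ := (Ext.mk₀_bijective _ _).2 y
    obtain ⟨l, rfl⟩ := W.exists_lift_cycles i t
    rw [← Ext.mk₀_comp_mk₀_assoc, hS.comp_extClass, Ext.comp_zero]
  | succ n ih =>
    obtain ⟨i, rfl⟩ : ∃ j, i = j + 1 := ⟨i - 1, by ring⟩
    refine subsingleton_of_forall_eq 0 fun x ↦ ?_
    have hS := W.cyclesSequence_shortExact i
    have : Injective (W.cyclesSequence i).X₂ :=
      (Module.injective_iff_injective_object R _).mp (W.inj _)
    have := ih i
    obtain ⟨y, rfl⟩ := Ext.covariant_sequence_exact₁ E hS x (Ext.eq_zero_of_injective _) rfl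
    rw [Subsingleton.elim y 0, Ext.zero_comp]

include W in
theorem gorensteinInjectiveObject : GorensteinInjectiveObject (ModuleCat.of R J) := by
  have hcycles : GorensteinInjectiveObject (W.cycles (-1)) := by
    refine ⟨fun B ↦ ∃ i, B = W.cycles i, ⟨-1, rfl⟩, ?_⟩
    rintro _ ⟨i, rfl⟩
    exact ⟨W.injOrthogonal_cycles i, W.cycles (i + 1), .of R (W.I (i + 1 + 1)),
      (Module.injective_iff_injective_object R _).mp (W.inj _),
      .of_shortExact (W.cyclesSequence_shortExact i), i + 1, rfl⟩
  obtain ⟨e⟩ := W.ker_iso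
  exact hcycles.of_iso e.symm.toModuleIso

end GorensteinInjectiveWitness

namespace GorensteinInjectiveObject

theorem isGorensteinInjective {J : ModuleCat.{u} R} (hJ : GorensteinInjectiveObject J) :
    IsGorensteinInjective R J := by
  obtain ⟨A, hA, h⟩ := exists_int_sequence
    (X := {A : ModuleCat.{u} R // GorensteinInjectiveObject A})
    (r := fun K B ↦ ∃ I : ModuleCat.{u} R, Injective I ∧ IsExtension K.1 I B.1)
    (fun B ↦ let ⟨K, I, hI, h, hK⟩ := B.2.exists_injective_extension; ⟨⟨K, hK⟩, I, hI, h⟩)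
    (fun K ↦ ⟨⟨_, .of_extension_injective (.of_mono (Injective.ι K.1)) K.2⟩, _,
      Injective.injective_under _, .of_mono _⟩) 1 ⟨J, hJ⟩
  choose I hI f g w hS using h
  have hf i := (hS i).mono_f
  have hexact i := (ShortComplex.ShortExact.moduleCat_exact_iff_function_exact _).mp (hS i).exact
  have hker i : LinearMap.ker (g (i + 1) ≫ f i).hom = LinearMap.range (f (i + 1)).hom := by
    rw [ModuleCat.hom_comp, LinearMap.ker_comp_of_ker_eq_bot _
      (LinearMap.ker_eq_bot.mpr (hS i).moduleCat_injective_f)]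
    exact (hexact (i + 1)).linearMap_ker_eq
  refine ⟨{
    I i := I i
    inj i := (Module.injective_iff_injective_object R _).mpr (hI i)
    d i := (g (i + 1) ≫ f i).hom
    d_comp_d i := ?_
    exact i := ?_
    hom_exact E _ _ hE i t ht := ?_
    ker_iso := ?_ }⟩
  · rw [← ModuleCat.hom_comp, Category.assoc, reassoc_of% w (i + 1), zero_comp, comp_zero]
    rfl
  · rw [hker, ModuleCat.hom_comp, LinearMap.range_comp,
      LinearMap.range_eq_top.mpr (hS (i + 1 + 1)).moduleCat_surjective_g, Submodule.map_top]
  · have : Injective (ModuleCat.of R E) := (Module.injective_iff_injective_object R E).mp hE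
    have htg : ModuleCat.ofHom t ≫ g (i + 1) = 0 := by
      rw [← cancel_mono (f i), zero_comp, Category.assoc]
      exact ModuleCat.hom_ext ht
    obtain ⟨l, hl⟩ := InjOrthogonal.exists_lift (hS (i + 1 + 1)) (A _).2.injOrthogonal
      ((hS (i + 1)).exact.lift _ htg)
    have : l ≫ g (i + 1 + 1) ≫ f (i + 1) = ModuleCat.ofHom t := by
      rw [reassoc_of% hl]
      exact (hS (i + 1)).exact.lift_f _ htg
    exact ⟨l.hom, congrArg ModuleCat.Hom.hom this⟩
  · obtain rfl : (A 1).1 = J := congrArg Subtype.val hA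
    rw [hker]
    exact ⟨.ofInjective (f (-1 + 1)).hom (hS (-1 + 1)).moduleCat_injective_f⟩

end GorensteinInjectiveObject

namespace GidWitness

attribute [local instance] acg mod

variable {M : Type u} [AddCommGroup M] [Module R M] {n : ℕ}

theorem surjective_ε (W : GidWitness R M 0) : Function.Surjective W.ε := by
  have : Subsingleton (W.J 1) := W.triv 1 Nat.one_pos
  rw [← LinearMap.range_eq_top, ← W.exact_zero, Subsingleton.elim (W.d 0) 0, LinearMap.ker_zero]

/-- The tail `0 → im d⁰ → J¹ → J² → ⋯` of the resolution. -/
def tail (W : GidWitness R M (n + 1)) : GidWitness R (LinearMap.range (W.d 0)) n where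
  J i := W.J (i + 1)
  gi i hi := W.gi (i + 1) (Nat.succ_le_succ hi)
  triv i hi := W.triv (i + 1) (Nat.succ_lt_succ hi)
  ε := (LinearMap.range (W.d 0)).subtype
  ε_inj := Subtype.val_injective
  d i := W.d (i + 1)
  exact_zero := by rw [Submodule.range_subtype, W.exact 0]
  exact i := W.exact (i + 1)

theorem isExtension_range (W : GidWitness R M n) :
    IsExtension (ModuleCat.of R M) (ModuleCat.of R (W.J 0))
      (ModuleCat.of R (LinearMap.range (W.d 0))) :=
  isExtension_of_exact W.ε_inj
    (LinearMap.exact_iff.mpr ((LinearMap.ker_rangeRestrict (W.d 0)).trans W.exact_zero))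
    (LinearMap.surjective_rangeRestrict (W.d 0))

theorem gidLE {n : ℕ} {M : Type u} [AddCommGroup M] [Module R M] (W : GidWitness R M n) :
    GidLE n (ModuleCat.of R M) := by
  induction n generalizing M with
  | zero =>
    obtain ⟨V⟩ := W.gi 0 le_rfl
    exact V.gorensteinInjectiveObject.of_iso
      (LinearEquiv.ofBijective W.ε ⟨W.ε_inj, W.surjective_ε⟩).symm.toModuleIso
  | succ n ih =>
    obtain ⟨V⟩ := W.gi 0 (Nat.zero_le _)
    exact ⟨_, _, V.gorensteinInjectiveObject, W.isExtension_range, ih W.tail⟩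

/-- The resolution of length `0` of a Gorenstein injective module. -/
def ofIsGorensteinInjective (hM : IsGorensteinInjective R M) : GidWitness R M 0 where
  J
    | 0 => M
    | _ + 1 => PUnit.{u + 1}
  acg
    | 0 => ‹_›
    | _ + 1 => (inferInstance : AddCommGroup PUnit.{u + 1})
  mod
    | 0 => ‹_›
    | _ + 1 => (inferInstance : Module R PUnit.{u + 1})
  gi
    | 0, _ => hM
  triv
    | _ + 1, _ => (inferInstance : Subsingleton PUnit.{u + 1})
  ε := .id
  ε_inj := Function.injective_id
  d _ := 0
  exact_zero := by rw [LinearMap.ker_zero, LinearMap.range_id]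
  exact _ := Subsingleton.elim (α := Submodule R PUnit.{u + 1}) _ _

/-- Splices `0 → M → J → K → 0` with a resolution of `K`. -/
def cons {J K : Type u} [AddCommGroup J] [Module R J] [AddCommGroup K] [Module R K]
    (hJ : IsGorensteinInjective R J) {f : M →ₗ[R] J} {g : J →ₗ[R] K} (hf : Function.Injective f)
    (hfg : Function.Exact f g) (hg : Function.Surjective g) (W : GidWitness R K n) :
    GidWitness R M (n + 1) where
  J
    | 0 => J
    | i + 1 => W.J i
  acg
    | 0 => ‹_›
    | i + 1 => W.acg i
  mod
    | 0 => ‹_›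
    | i + 1 => W.mod i
  gi
    | 0, _ => hJ
    | i + 1, hi => W.gi i (Nat.le_of_succ_le_succ hi)
  triv
    | i + 1, hi => W.triv i (Nat.lt_of_succ_lt_succ hi)
  ε := f
  ε_inj := hf
  d
    | 0 => W.ε ∘ₗ g
    | i + 1 => W.d i
  exact_zero := (LinearMap.ker_comp_of_ker_eq_bot _ (LinearMap.ker_eq_bot.mpr W.ε_inj)).trans
    hfg.linearMap_ker_eq
  exact
    | 0 => W.exact_zero.trans
        (LinearMap.range_comp_of_range_eq_top _ (LinearMap.range_eq_top.mpr hg)).symm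
    | i + 1 => W.exact i

end GidWitness

theorem GidLE.nonempty_gidWitness {n : ℕ} {M : ModuleCat.{u} R} (hM : GidLE n M) :
    Nonempty (GidWitness R M n) := by
  induction n generalizing M with
  | zero => exact ⟨.ofIsGorensteinInjective hM.isGorensteinInjective⟩
  | succ n ih =>
    obtain ⟨J, K, hJ, h, hK⟩ := hM
    obtain ⟨f, g, hf, hfg, hg⟩ := h.exists_linearMap
    obtain ⟨W⟩ := ih hK
    exact ⟨.cons hJ.isGorensteinInjective hf hfg hg W⟩

variable {M : Type u} [AddCommGroup M] [Module R M] {n : ℕ}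

theorem gid_le_of_gidLE (hM : GidLE n (ModuleCat.of R M)) : gid R M ≤ n :=
  sInf_le ⟨n, rfl, hM.nonempty_gidWitness⟩

theorem gidLE_of_gid_eq (hM : gid R M = n) : GidLE n (ModuleCat.of R M) := by
  have hne : {c : ℕ∞ | ∃ n : ℕ, c = n ∧ Nonempty (GidWitness R M n)}.Nonempty :=
    Set.nonempty_iff_ne_empty.mpr fun h ↦ ENat.natCast_ne_top n (by rw [← hM, gid, h, sInf_empty])
  obtain ⟨m, hm, ⟨W⟩⟩ := csInf_mem hne
  obtain rfl : n = m := Nat.cast_injective (hM.symm.trans hm)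
  exact W.gidLE

end Witnesses

section TorExt

open scoped TensorProduct

theorem exact_dualMap_iff {k V₁ V₂ V₃ : Type*} [Field k] [AddCommGroup V₁] [Module k V₁]
    [AddCommGroup V₂] [Module k V₂] [AddCommGroup V₃] [Module k V₃] (f : V₁ →ₗ[k] V₂)
    (g : V₂ →ₗ[k] V₃) : Function.Exact g.dualMap f.dualMap ↔ Function.Exact f g := by
  rw [LinearMap.exact_iff, LinearMap.exact_iff, LinearMap.ker_dualMap_eq_dualAnnihilator_range,
    LinearMap.range_dualMap_eq_dualAnnihilator_ker, Subspace.dualAnnihilator_inj, eq_comm]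

theorem exact_lcomp_iff_exact_lTensor {A k N₁ N₂ N₃ : Type u} [CommRing A]
    [Field k] [Algebra A k] [AddCommGroup N₁] [Module A N₁] [AddCommGroup N₂] [Module A N₂]
    [AddCommGroup N₃] [Module A N₃] (f : N₁ →ₗ[A] N₂) (g : N₂ →ₗ[A] N₃) :
    Function.Exact (LinearMap.lcomp A k g) (LinearMap.lcomp A k f) ↔
      Function.Exact (f.lTensor k) (g.lTensor k) := by
  refine Iff.trans ?_ (exact_dualMap_iff (f.baseChange k) (g.baseChange k))
  let e (N : Type u) [AddCommGroup N] [Module A N] := (LinearMap.liftBaseChangeEquiv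
    (R := A) (M := N) (N := k) k).toAddEquiv
  refine (Function.Exact.iff_of_ladder_addEquiv (e N₃) (e N₂) (e N₁)
    (f₁₂ := (LinearMap.lcomp A k g).toAddMonoidHom) (f₂₃ := (LinearMap.lcomp A k f).toAddMonoidHom)
    (g₁₂ := (g.baseChange k).dualMap.toAddMonoidHom)
    (g₂₃ := (f.baseChange k).dualMap.toAddMonoidHom) ?_ ?_).symm
  all_goals
    ext
    simp [e]

theorem subsingleton_linearMap_iff_subsingleton_tensorProduct {A k N : Type u} [CommRing A]
    [Field k] [Algebra A k] [AddCommGroup N] [Module A N] :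
    Subsingleton (N →ₗ[A] k) ↔ Subsingleton (k ⊗[A] N) :=
  (LinearMap.liftBaseChangeEquiv (R := A) (M := N) (N := k) k).toEquiv.subsingleton_congr.trans
    (Module.subsingleton_dual_iff k)

theorem subsingleton_ext_succ_iff {C : Type*} [Category* C] [Abelian C] [HasExt.{u} C] {X : C}
    (P : ProjectiveResolution X) (Y : C) (n : ℕ) : Subsingleton (Ext X Y (n + 1)) ↔
      ∀ φ : P.complex.X (n + 1) ⟶ Y, P.complex.d (n + 2) (n + 1) ≫ φ = 0 →
        ∃ ψ, P.complex.d (n + 1) n ≫ ψ = φ := by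
  refine ⟨fun _ φ hφ ↦ (P.extMk_eq_zero_iff φ (n + 2) rfl hφ n rfl).mp (Subsingleton.elim _ _),
    fun h ↦ subsingleton_of_forall_eq 0 fun x ↦ ?_⟩
  obtain ⟨φ, hφ, rfl⟩ := P.extMk_surjective x (n + 2) rfl
  exact (P.extMk_eq_zero_iff φ (n + 2) rfl hφ n rfl).mpr (h φ hφ)

variable {A : Type u} [CommRing A]

theorem subsingleton_tor_succ_iff (X : ModuleCat.{u} A) {Y : ModuleCat.{u} A}
    (P : ProjectiveResolution Y) (n : ℕ) :
    Subsingleton (((Tor (ModuleCat.{u} A) (n + 1)).obj X).obj Y) ↔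
      Function.Exact ((P.complex.d (n + 2) (n + 1)).hom.lTensor X)
        ((P.complex.d (n + 1) n).hom.lTensor X) := by
  rw [← ModuleCat.isZero_iff_subsingleton]
  change IsZero ((((MonoidalCategory.tensoringLeft _).obj X).leftDerived (n + 1)).obj Y) ↔ _
  rw [(P.isoLeftDerivedObj ((MonoidalCategory.tensoringLeft _).obj X) (n + 1)).isZero_iff]
  erw [← HomologicalComplex.exactAt_iff_isZero_homology]
  rw [HomologicalComplex.exactAt_iff' _ (n + 2) (n + 1) n (by simp) (by simp),
    ShortComplex.ShortExact.moduleCat_exact_iff_function_exact]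
  rfl

theorem subsingleton_tor_iff_subsingleton_ext (k : Type u) [Field k] [Algebra A k]
    (N : ModuleCat.{u} A) (n : ℕ) :
    Subsingleton (((Tor (ModuleCat.{u} A) n).obj (ModuleCat.of A k)).obj N) ↔
      Subsingleton (Ext N (ModuleCat.of A k) n) := by
  cases n with
  | zero =>
    let e : ((Tor (ModuleCat.{u} A) 0).obj (ModuleCat.of A k)).obj N ≅ _ :=
      (((MonoidalCategory.tensoringLeft _).obj (ModuleCat.of A k)).leftDerivedZeroIsoSelf).app N
    rw [e.toLinearEquiv.toEquiv.subsingleton_congr, Ext.homEquiv₀.subsingleton_congr,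
      ModuleCat.homEquiv.subsingleton_congr,
      subsingleton_linearMap_iff_subsingleton_tensorProduct]
    rfl
  | succ n =>
    let P := projectiveResolution N
    rw [subsingleton_tor_succ_iff _ P, subsingleton_ext_succ_iff P]
    refine (exact_lcomp_iff_exact_lTensor _ _).symm.trans
      ⟨fun h φ hφ ↦ ?_, fun h φ ↦ ⟨fun hφ ↦ ?_, ?_⟩⟩
    · obtain ⟨ψ, hψ⟩ := (h φ.hom).mp congr(($hφ).hom)
      exact ⟨ModuleCat.ofHom ψ, ModuleCat.hom_ext hψ⟩
    · obtain ⟨ψ, hψ⟩ := h (ModuleCat.ofHom φ) (ModuleCat.hom_ext hφ)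
      exact ⟨ψ.hom, congr(($hψ).hom)⟩
    · rintro ⟨ψ, rfl⟩
      have d_comp_d := congr(($(P.complex.d_comp_d (n + 2) (n + 1) n)).hom)
      exact LinearMap.ext fun x ↦ (congr(ψ ($d_comp_d x))).trans (map_zero ψ)

end TorExt

section ExtVanishing

universe w v₁ u₁

variable {C : Type u₁} [Category.{v₁} C] [Abelian C] [HasExt.{w} C]

theorem injective_precomp_mk₀_of_shortExact {S : ShortComplex C} (hS : S.ShortExact) {Y : C}
    {n : ℕ} (h : ∀ i, i + 1 = n → Subsingleton (Ext S.X₁ Y i)) :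
    Function.Injective ((Ext.mk₀ S.g).precomp Y (zero_add n)) := by
  refine (injective_iff_map_eq_zero _).mpr fun x hx ↦ ?_
  cases n with
  | zero =>
    have := hS.epi_g
    exact Ext.precomp_mk₀_injective_of_epi Y S.g (hx.trans (map_zero _).symm)
  | succ n =>
    have := h n rfl
    obtain ⟨y, rfl⟩ := Ext.contravariant_sequence_exact₃ hS Y x hx (add_comm 1 n)
    rw [Subsingleton.elim y 0, Ext.comp_zero]

theorem injective_precomp_mk₀_f_of_shortExact {S : ShortComplex C} (hS : S.ShortExact) {Y : C}
    {n : ℕ} [Subsingleton (Ext S.X₃ Y n)] :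
    Function.Injective ((Ext.mk₀ S.f).precomp Y (zero_add n)) := by
  refine (injective_iff_map_eq_zero _).mpr fun x hx ↦ ?_
  obtain ⟨y, rfl⟩ := Ext.contravariant_sequence_exact₂ hS Y x hx
  rw [Subsingleton.elim y 0, Ext.comp_zero]

theorem injective_precomp_mk₀_τ₁ {S T : ShortComplex C} (hS : S.ShortExact) (hT : T.ShortExact)
    (φ : S ⟶ T) {Y : C} {n : ℕ} [Subsingleton (Ext T.X₂ Y n)]
    (h : Function.Injective ((Ext.mk₀ φ.τ₃).precomp Y (zero_add (n + 1)))) :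
    Function.Injective ((Ext.mk₀ φ.τ₁).precomp Y (zero_add n)) := by
  refine (injective_iff_map_eq_zero _).mpr fun x hx ↦ ?_
  have : hT.extClass.comp x (add_comm 1 n) = 0 := (injective_iff_map_eq_zero _).mp h _ <| by
    change (Ext.mk₀ φ.τ₃).comp (hT.extClass.comp x (add_comm 1 n)) (zero_add (n + 1)) = 0
    rw [← Ext.comp_assoc _ _ _ (zero_add 1) (add_comm 1 n) (by omega),
      ← ShortComplex.ShortExact.extClass_naturality hS hT φ,
      Ext.comp_assoc _ _ _ (add_zero 1) (zero_add n) (by omega)]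
    exact congr((hS.extClass).comp $hx _).trans (Ext.comp_zero _ _ _ _ _)
  obtain ⟨y, rfl⟩ := Ext.contravariant_sequence_exact₁ hT Y x (add_comm 1 n) this
  rw [Subsingleton.elim y 0, Ext.comp_zero]

theorem injective_precomp_mk₀_comp {X X' X'' : C} {f : X ⟶ X'} {g : X' ⟶ X''} {Y : C} {n : ℕ}
    (hf : Function.Injective ((Ext.mk₀ f).precomp Y (zero_add n)))
    (hg : Function.Injective ((Ext.mk₀ g).precomp Y (zero_add n))) :
    Function.Injective ((Ext.mk₀ (f ≫ g)).precomp Y (zero_add n)) := fun x y hxy ↦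
  hg <| hf <| by simpa using hxy

theorem injective_precomp_mk₀_of_isIso {X X' : C} (f : X ⟶ X') [IsIso f] {Y : C} (n : ℕ) :
    Function.Injective ((Ext.mk₀ f).precomp Y (zero_add n)) :=
  Function.LeftInverse.injective (g := (Ext.mk₀ (inv f)).precomp Y (zero_add n)) fun x ↦ by simp

theorem hom_injective_of_injective_precomp_mk₀ {X X' : C} {f : X ⟶ X'} {Y : C}
    (h : Function.Injective ((Ext.mk₀ f).precomp Y (zero_add 0))) :
    Function.Injective fun g : X' ⟶ Y ↦ f ≫ g := fun g g' hg ↦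
  (Ext.mk₀_bijective X' Y).injective <| h <| by simpa using congr(Ext.mk₀ $hg)

namespace IsExtension

variable {K X Q Y : C} {n : ℕ}

theorem subsingleton_ext (h : IsExtension K X Q) [Subsingleton (Ext K Y n)]
    [Subsingleton (Ext Q Y n)] : Subsingleton (Ext X Y n) := by
  obtain ⟨f, g, w, hS⟩ := h
  exact (injective_precomp_mk₀_f_of_shortExact hS).subsingleton

theorem subsingleton_ext_left (h : IsExtension K X Q) [Subsingleton (Ext X Y n)]
    [Subsingleton (Ext Q Y (n + 1))] : Subsingleton (Ext K Y n) := by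
  obtain ⟨f, g, w, hS⟩ := h
  refine subsingleton_of_forall_eq 0 fun x ↦ ?_
  obtain ⟨y, rfl⟩ := Ext.contravariant_sequence_exact₁ hS Y x (add_comm 1 n)
    (Subsingleton.elim _ _)
  rw [Subsingleton.elim y 0, Ext.comp_zero]

theorem subsingleton_ext_right (h : IsExtension K X Q) [Subsingleton (Ext X Y n)]
    (hK : ∀ i, i + 1 = n → Subsingleton (Ext K Y i)) : Subsingleton (Ext Q Y n) := by
  obtain ⟨f, g, w, hS⟩ := h
  exact (injective_precomp_mk₀_of_shortExact hS hK).subsingleton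

end IsExtension

/-- `ExtVanishesBelow d X Y` means that `Extⁱ(X, Y) = 0` for all `i < d`. For a module `X` over
a local ring with residue field `Y` it expresses that the width of `X` is at least `d`. -/
def ExtVanishesBelow (d : ℕ) (X Y : C) : Prop :=
  ∀ i < d, Subsingleton (Ext X Y i)

namespace ExtVanishesBelow

variable {K X Q Y : C} {d : ℕ}

theorem of_le {e : ℕ} (h : ExtVanishesBelow d X Y) (he : e ≤ d) : ExtVanishesBelow e X Y :=
  fun i hi ↦ h i (hi.trans_le he)

theorem left (h : IsExtension K X Q) (hX : ExtVanishesBelow d X Y)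
    (hQ : ExtVanishesBelow (d + 1) Q Y) : ExtVanishesBelow d K Y := fun i hi ↦
  have := hX i hi
  have := hQ (i + 1) (Nat.succ_lt_succ hi)
  h.subsingleton_ext_left

theorem right (h : IsExtension K X Q) (hK : ExtVanishesBelow d K Y)
    (hX : ExtVanishesBelow (d + 1) X Y) : ExtVanishesBelow (d + 1) Q Y := fun i hi ↦
  have := hX i hi
  h.subsingleton_ext_right fun j hj ↦ hK j (by omega)

end ExtVanishesBelow

section ExactFunctor

variable {D : Type*} [Category* D] [Abelian D] [HasExt.{w} D] {F : D ⥤ C}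
  [F.PreservesZeroMorphisms] [PreservesFiniteLimits F] [PreservesFiniteColimits F] {Y : C}

theorem GorensteinInjectiveObject.extVanishesBelow_map {d : ℕ}
    (hF : ∀ (I : D) [Injective I], ExtVanishesBelow d (F.obj I) Y) {B : D}
    (hB : GorensteinInjectiveObject B) : ExtVanishesBelow d (F.obj B) Y := by
  induction d generalizing B with
  | zero => exact fun i hi ↦ absurd hi i.not_lt_zero
  | succ d ih =>
    obtain ⟨K, I, _, h, hK⟩ := hB.exists_injective_extension
    exact .right (h.map F) (ih (fun I _ ↦ (hF I).of_le d.le_succ) hK) (hF I)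

theorem GidLE.extVanishesBelow_map {d n : ℕ}
    (hF : ∀ (I : D) [Injective I], ExtVanishesBelow (d + n) (F.obj I) Y) {M : D}
    (hM : GidLE n M) : ExtVanishesBelow d (F.obj M) Y := by
  induction n generalizing d M with
  | zero => exact GorensteinInjectiveObject.extVanishesBelow_map hF hM
  | succ n ih =>
    obtain ⟨J, Q, hJ, h, hQ⟩ := hM
    exact .left (h.map F) ((hJ.extVanishesBelow_map hF).of_le (Nat.le_add_right _ _))
      (ih (fun I _ ↦ (hF I).of_le (by omega)) hQ)

end ExactFunctor

end ExtVanishing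

section Local

open IsLocalRing RingTheory.Sequence
open scoped Pointwise TensorProduct

variable {A : Type u} [CommRing A]

/-- The sequence `0 → Hom(Y/xY, E) → Hom(Y, E) → Hom(Y, E) → 0` with second map multiplication by
`x`. -/
noncomputable def homQuotSMulTopSequence (x : A) (Y E : ModuleCat.{u} A) :
    ShortComplex (ModuleCat.{u} A) where
  X₁ := ModuleCat.of A (QuotSMulTop x Y →ₗ[A] E)
  X₂ := ModuleCat.of A (Y →ₗ[A] E)
  X₃ := ModuleCat.of A (Y →ₗ[A] E)
  f := ModuleCat.ofHom (LinearMap.lcomp A E (x • (⊤ : Submodule A Y)).mkQ)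
  g := x • 𝟙 _
  zero := by
    ext f y
    have hy : (x • (⊤ : Submodule A Y)).mkQ (x • y) = 0 :=
      (Submodule.Quotient.mk_eq_zero _).mpr (Submodule.smul_mem_pointwise_smul _ _ _ trivial)
    exact (f.map_smul x _).symm.trans (((congr(f $hy)).trans f.map_zero))

theorem homQuotSMulTopSequence_shortExact {x : A} {Y E : ModuleCat.{u} A} [Injective E]
    (hx : IsSMulRegular Y x) : (homQuotSMulTopSequence x Y E).ShortExact := by
  have hE : Module.Injective A E := Module.injective_module_of_injective_object A E
  refine .mk' ?_ ?_ ?_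
  · refine (ShortComplex.ShortExact.moduleCat_exact_iff_function_exact _).mpr fun (f : Y →ₗ[A] E) ↦
      ⟨fun hf ↦ ?_, ?_⟩
    · have hf : x • f = 0 := hf
      have : x • (⊤ : Submodule A Y) ≤ LinearMap.ker f := by
        rintro _ ⟨y, -, rfl⟩
        exact (f.map_smul x y).trans congr($hf y)
      exact ⟨Submodule.liftQ _ f this, Submodule.liftQ_mkQ _ f this⟩
    · rintro ⟨f, rfl⟩
      exact congr(($((homQuotSMulTopSequence x Y E).zero)).hom f)
  · exact (ModuleCat.mono_iff_injective _).mpr fun f g h ↦ Submodule.linearMap_qext _ h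
  · refine (ModuleCat.epi_iff_surjective _).mpr fun f ↦ ?_
    obtain ⟨g, hg⟩ := hE.out (x • (LinearMap.id : Y →ₗ[A] Y)) hx f
    exact ⟨g, LinearMap.ext fun y ↦ (g.map_smul x y).symm.trans (hg y)⟩

/-- The morphism of sequences induced by a map `E → E'`. -/
noncomputable def homQuotSMulTopSequenceMap (x : A) (Y : ModuleCat.{u} A)
    {E E' : ModuleCat.{u} A} (φ : E ⟶ E') :
    homQuotSMulTopSequence x Y E ⟶ homQuotSMulTopSequence x Y E' where
  τ₁ := ModuleCat.ofHom (LinearMap.compRight A φ.hom)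
  τ₂ := ModuleCat.ofHom (LinearMap.compRight A φ.hom)
  τ₃ := ModuleCat.ofHom (LinearMap.compRight A φ.hom)
  comm₂₃ := ModuleCat.hom_ext <| LinearMap.ext fun f ↦
    ((LinearMap.compRight A φ.hom).map_smul x f).symm

theorem precomp_mk₀_smul_id {X K : ModuleCat.{u} A} {x : A} (hx : ∀ y : K, x • y = 0) {n : ℕ}
    (e : Ext X K n) : (Ext.mk₀ (x • 𝟙 X)).comp e (zero_add n) = 0 := by
  have : x • 𝟙 K = 0 := by ext y; exact hx y
  rw [Ext.mk₀_smul, Ext.smul_comp, Ext.mk₀_id_comp, Ext.smul_eq_comp_mk₀, this, Ext.mk₀_zero,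
    Ext.comp_zero]

theorem extVanishesBelow_linearMap {Y E K : ModuleCat.{u} A} [Injective E] {rs : List A}
    (hK : ∀ r ∈ rs, ∀ y : K, r • y = 0) (hrs : IsWeaklyRegular Y rs) :
    ExtVanishesBelow rs.length (ModuleCat.of A (Y →ₗ[A] E)) K := by
  induction rs generalizing Y with
  | nil => exact fun i hi ↦ absurd hi i.not_lt_zero
  | cons x rs ih =>
    obtain ⟨hx, hrs⟩ := (isWeaklyRegular_cons_iff _ _ _).mp hrs
    intro n hn
    have ih := ih (Y := ModuleCat.of A (QuotSMulTop x Y)) (fun r hr ↦ hK r (by simp [hr])) hrs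
    refine subsingleton_of_forall_eq 0 fun e ↦ (injective_iff_map_eq_zero _).mp
      (injective_precomp_mk₀_of_shortExact (homQuotSMulTopSequence_shortExact (E := E) hx)
        fun i hi ↦ ih i ?_) e (precomp_mk₀_smul_id (hK x (by simp)) e)
    rw [List.length_cons] at hn
    omega

/-- `φ : E → E'` is `TorsionSurjective` at the ideal `a` if it maps the `a`-torsion of `E` onto that
of `E'`, that is, if `Hom(A/a, E) → Hom(A/a, E')` is surjective. -/
def TorsionSurjective {E E' : Type*} [AddCommGroup E] [Module A E] [AddCommGroup E'] [Module A E']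
    (φ : E →ₗ[A] E') (a : Ideal A) : Prop :=
  Submodule.torsionBySet A E' a ≤ (Submodule.torsionBySet A E a).map φ

theorem ker_lt_ker_mkQ_comp {Y Z : Type*} [AddCommGroup Y] [Module A Y] [AddCommGroup Z]
    [Module A Z] [Nontrivial Z] {q : Y →ₗ[A] Z} (hq : Function.Surjective q) {x : A}
    (hx : IsSMulRegular Z x) :
    LinearMap.ker q < LinearMap.ker ((x • (⊤ : Submodule A Z)).mkQ ∘ₗ q) := by
  refine (LinearMap.ker_le_ker_comp _ _).lt_of_not_ge fun hle ↦ ?_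
  obtain ⟨z, hz⟩ := exists_ne (0 : Z)
  obtain ⟨y, rfl⟩ := hq z
  have : x • y ∈ LinearMap.ker q := hle <| by
    rw [LinearMap.mem_ker, LinearMap.comp_apply, map_smul, Submodule.mkQ_apply,
      Submodule.Quotient.mk_eq_zero]
    exact Submodule.smul_mem_pointwise_smul _ _ _ trivial
  rw [LinearMap.mem_ker, map_smul] at this
  exact hz (hx (this.trans (smul_zero x).symm))

variable [IsLocalRing A]

theorem smul_residueField_eq_zero {a : A} (ha : a ∈ maximalIdeal A) (y : ResidueField A) :
    a • y = 0 := by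
  rw [Algebra.smul_def, ResidueField.algebraMap_eq, (residue_eq_zero_iff a).mpr ha, zero_mul]

theorem range_sup_maximalIdeal_smul_top {V W : Type u} [AddCommGroup V] [Module A V]
    [AddCommGroup W] [Module A W] {f : V →ₗ[A] W}
    (hf : Function.Injective (LinearMap.lcomp A (ResidueField A) f)) :
    LinearMap.range f ⊔ maximalIdeal A • ⊤ = ⊤ := by
  have : Subsingleton ((W ⧸ LinearMap.range f) →ₗ[A] ResidueField A) := by
    refine subsingleton_of_forall_eq 0 fun h ↦ Submodule.linearMap_qext _ <| hf ?_
    exact LinearMap.ext fun v ↦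
      congr(h $((Submodule.Quotient.mk_eq_zero _).mpr (LinearMap.mem_range_self f v))).trans
        (map_zero h)
  have : Subsingleton ((A ⧸ maximalIdeal A) ⊗[A] (W ⧸ LinearMap.range f)) :=
    subsingleton_linearMap_iff_subsingleton_tensorProduct.mp this
  have smul_top : maximalIdeal A • (⊤ : Submodule A (W ⧸ LinearMap.range f)) = ⊤ :=
    Submodule.Quotient.subsingleton_iff.mp
      (TensorProduct.quotTensorEquivQuotSMul _ _).symm.injective.subsingleton
  rw [← Submodule.comap_map_mkQ, Submodule.map_smul'', Submodule.map_top, Submodule.range_mkQ,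
    smul_top, Submodule.comap_top]

theorem torsionSurjective_of_range_compRight {Y E E' : Type u} [AddCommGroup Y] [Module A Y]
    [AddCommGroup E] [Module A E] [AddCommGroup E'] [Module A E'] [Module.Injective A E']
    [Nontrivial (ResidueField A →ₗ[A] Y)] {φ : E →ₗ[A] E'}
    (h : LinearMap.range (LinearMap.compRight (M := Y) A φ) ⊔ maximalIdeal A • ⊤ = ⊤) :
    TorsionSurjective φ (maximalIdeal A) := by
  obtain ⟨t, ht⟩ := exists_ne (0 : ResidueField A →ₗ[A] Y)
  have : IsSimpleModule A (ResidueField A) :=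
    isSimpleModule_iff_isCoatom.mpr (maximalIdeal.isMaximal A).out
  have t_inj : Function.Injective t := LinearMap.injective_of_ne_zero ht
  have smul_t_one {a : A} (ha : a ∈ maximalIdeal A) : a • t 1 = 0 := by
    rw [← map_smul, smul_residueField_eq_zero ha, map_zero]
  intro y hy
  rw [Submodule.mem_torsionBySet_iff] at hy
  let s : ResidueField A →ₗ[A] E' :=
    Submodule.liftQ _ (LinearMap.toSpanSingleton A E' y) fun a ha ↦ hy ⟨a, ha⟩
  obtain ⟨e', he'⟩ := Module.Injective.out t t_inj s
  have he' : e' (t 1) = y := (he' 1).trans (one_smul A y)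
  obtain ⟨_, ⟨e, rfl⟩, w, hw, hew⟩ := Submodule.mem_sup.mp (h ▸ Submodule.mem_top : e' ∈ _)
  have w_t_one : w (t 1) = 0 := by
    have : maximalIdeal A • ⊤ ≤ LinearMap.ker (LinearMap.applyₗ (R := A) (M₂ := E') (t 1)) :=
      Submodule.smul_le.mpr fun a ha f _ ↦
        (f.map_smul a (t 1)).symm.trans (congr(f $(smul_t_one ha)).trans f.map_zero)
    exact this hw
  refine ⟨e (t 1), (Submodule.mem_torsionBySet_iff _ _).mpr fun a ↦ ?_, ?_⟩
  · exact (e.map_smul a.1 (t 1)).symm.trans (congr(e $(smul_t_one a.2)).trans e.map_zero)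
  · rw [← he', ← hew, LinearMap.add_apply, w_t_one, add_zero]
    rfl

/-- `IsMaximalRegular rs Y` says that `rs` is a weakly `Y`-regular sequence in the maximal ideal
which is maximal in the sense that `Y ⧸ rs Y` has a nonzero socle. -/
def IsMaximalRegular : List A → ModuleCat.{u} A → Prop
  | [], Y => Nontrivial (ResidueField A →ₗ[A] Y)
  | x :: rs, Y => x ∈ maximalIdeal A ∧ IsSMulRegular Y x ∧
      IsMaximalRegular rs (ModuleCat.of A (QuotSMulTop x Y))

namespace IsMaximalRegular

theorem mem_maximalIdeal {rs : List A} {Y : ModuleCat.{u} A} (h : IsMaximalRegular rs Y) :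
    ∀ r ∈ rs, r ∈ maximalIdeal A := by
  induction rs generalizing Y with
  | nil => exact fun r hr ↦ absurd hr List.not_mem_nil
  | cons x rs ih => exact List.forall_mem_cons.mpr ⟨h.1, ih h.2.2⟩

theorem isWeaklyRegular {rs : List A} {Y : ModuleCat.{u} A} (h : IsMaximalRegular rs Y) :
    IsWeaklyRegular Y rs := by
  induction rs generalizing Y with
  | nil => exact .nil A Y
  | cons x rs ih => exact (isWeaklyRegular_cons_iff _ _ _).mpr ⟨h.2.1, ih h.2.2⟩

end IsMaximalRegular

theorem exists_isMaximalRegular [IsNoetherianRing A] {Y : ModuleCat.{u} A} [Module.Finite A Y]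
    [Nontrivial Y] : ∃ rs, IsMaximalRegular rs Y := by
  suffices H : ∀ (N : Submodule A Y) (Z : ModuleCat.{u} A) (q : Y →ₗ[A] Z), Nontrivial Z →
      Function.Surjective q → LinearMap.ker q = N → ∃ rs, IsMaximalRegular rs Z from
    H ⊥ Y LinearMap.id ‹_› Function.surjective_id LinearMap.ker_id
  intro N
  induction N using WellFoundedGT.induction with
  | ind N ih =>
    rintro Z q hZ hq rfl
    have : Module.Finite A Z := .of_surjective q hq
    by_cases hsocle : Subsingleton (ResidueField A →ₗ[A] Z)
    · obtain ⟨x, hx, hxZ⟩ := IsSMulRegular.subsingleton_linearMap_iff.mp hsocle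
      replace hx : x ∈ maximalIdeal A := Ideal.annihilator_quotient (I := maximalIdeal A) ▸ hx
      obtain ⟨rs, hrs⟩ := ih _ (ker_lt_ker_mkQ_comp hq hxZ) (ModuleCat.of A (QuotSMulTop x Z)) _
        (nontrivial_quotSMulTop_of_mem_maximalIdeal Z hx)
        ((Submodule.mkQ_surjective _).comp hq) rfl
      exact ⟨x :: rs, hx, hxZ, hrs⟩
    · exact ⟨[], not_subsingleton_iff_nontrivial.mp hsocle⟩

theorem IsMaximalRegular.torsionSurjective {Y E E' : ModuleCat.{u} A} [Injective E] [Injective E']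
    {φ : E ⟶ E'} {rs : List A} (hrs : IsMaximalRegular rs Y)
    (hφ : Function.Injective ((Ext.mk₀ (ModuleCat.ofHom
      (LinearMap.compRight (M := Y) A φ.hom))).precomp (ModuleCat.of A (ResidueField A))
        (zero_add rs.length))) :
    TorsionSurjective φ.hom (maximalIdeal A) := by
  induction rs generalizing Y with
  | nil =>
    have : Module.Injective A E' := Module.injective_module_of_injective_object A E'
    have : Nontrivial (ResidueField A →ₗ[A] Y) := hrs
    exact torsionSurjective_of_range_compRight (Y := Y) <| range_sup_maximalIdeal_smul_top
      fun h h' hh ↦ congr(ModuleCat.Hom.hom $(hom_injective_of_injective_precomp_mk₀ hφ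
        (a₁ := ModuleCat.ofHom h) (a₂ := ModuleCat.ofHom h') (ModuleCat.hom_ext hh)))
  | cons x rs ih =>
    have : Subsingleton (Ext (homQuotSMulTopSequence x Y E').X₂ (ModuleCat.of A (ResidueField A))
        rs.length) :=
      extVanishesBelow_linearMap (fun r hr ↦ smul_residueField_eq_zero (hrs.mem_maximalIdeal r hr))
        hrs.isWeaklyRegular rs.length rs.length.lt_succ_self
    exact ih hrs.2.2 (injective_precomp_mk₀_τ₁ (homQuotSMulTopSequence_shortExact hrs.2.1)
      (homQuotSMulTopSequence_shortExact hrs.2.1) (homQuotSMulTopSequenceMap x Y φ) hφ)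

/-- Evaluation at `1` as an isomorphism `Hom(A, E) ≅ E`. -/
noncomputable def linearMapSelfIso (E : ModuleCat.{u} A) :
    ModuleCat.of A (ModuleCat.of A A →ₗ[A] E) ≅ E :=
  (LinearMap.ringLmapEquivSelf A A E).toModuleIso

theorem extVanishesBelow_residueField {d : ℕ} (hd : d ≤ ringDepth A) (E : ModuleCat.{u} A)
    [Injective E] : ExtVanishesBelow d E (ModuleCat.of A (ResidueField A)) := by
  intro i hi
  obtain ⟨_, ⟨rs, rfl, hrs, hreg⟩, hi⟩ := lt_sSup_iff.mp ((Nat.cast_lt.mpr hi).trans_le hd)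
  have := extVanishesBelow_linearMap (Y := ModuleCat.of A A) (E := E)
    (K := ModuleCat.of A (ResidueField A))
    (fun r hr ↦ smul_residueField_eq_zero (hrs r hr)) hreg.toIsWeaklyRegular i (Nat.cast_lt.mp hi)
  exact (injective_precomp_mk₀_of_isIso (linearMapSelfIso E).hom i).subsingleton

theorem exists_le_ringDepth_torsionSurjective (A : Type u) [CommRing A] [IsLocalRing A]
    [IsNoetherianRing A] : ∃ d : ℕ, d ≤ ringDepth A ∧ ∀ {E E' : ModuleCat.{u} A} [Injective E]
      [Injective E'] {φ : E ⟶ E'}, Function.Injective ((Ext.mk₀ φ).precomp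
        (ModuleCat.of A (ResidueField A)) (zero_add d)) →
      TorsionSurjective φ.hom (maximalIdeal A) := by
  obtain ⟨rs, hrs⟩ := exists_isMaximalRegular (Y := ModuleCat.of A A)
  refine ⟨rs.length, le_sSup ⟨rs, rfl, hrs.mem_maximalIdeal, ?_⟩, fun {E E'} _ _ φ hφ ↦
    hrs.torsionSurjective ?_⟩
  · exact (isRegular_iff_isWeaklyRegular_of_subset_maximalIdeal hrs.mem_maximalIdeal).mpr
      hrs.isWeaklyRegular
  · have : ModuleCat.ofHom (LinearMap.compRight (M := A) A φ.hom) =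
        (linearMapSelfIso E).hom ≫ φ ≫ (linearMapSelfIso E').inv :=
      ((linearMapSelfIso E').eq_comp_inv.mpr rfl).trans (Category.assoc _ _ _)
    exact this ▸ injective_precomp_mk₀_comp (injective_precomp_mk₀_of_isIso _ _)
      (injective_precomp_mk₀_comp hφ (injective_precomp_mk₀_of_isIso _ _))

theorem natCast_le_modWidth_iff {N : ModuleCat.{u} A} {d : ℕ} :
    d ≤ modWidth A N ↔ ExtVanishesBelow d N (ModuleCat.of A (ResidueField A)) := by
  refine ⟨fun h i hi ↦ ?_, fun h ↦ le_sInf ?_⟩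
  · rw [← subsingleton_tor_iff_subsingleton_ext]
    by_contra hne
    exact (Nat.cast_lt.mpr hi).not_ge (h.trans (sInf_le ⟨i, rfl, hne⟩))
  · rintro _ ⟨i, rfl, hne⟩
    refine Nat.cast_le.mpr (not_lt.mp fun hi ↦ hne ?_)
    exact (subsingleton_tor_iff_subsingleton_ext _ N i).mpr (h i hi)

theorem modWidth_le_of_not_subsingleton_ext {N : ModuleCat.{u} A} {i : ℕ}
    (h : ¬ Subsingleton (Ext N (ModuleCat.of A (ResidueField A)) i)) : modWidth A N ≤ i :=
  sInf_le ⟨i, rfl, mt (subsingleton_tor_iff_subsingleton_ext _ N i).mp h⟩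

theorem modWidth_congr {N N' : Type u} [AddCommGroup N] [Module A N] [AddCommGroup N']
    [Module A N'] (e : N ≃ₗ[A] N') : modWidth A N = modWidth A N' := by
  have tor_iso (i : ℕ) := ((Tor (ModuleCat.{u} A) i).obj
    (ModuleCat.of A (ResidueField A))).mapIso e.toModuleIso
  simp only [modWidth, (tor_iso _).toLinearEquiv.toEquiv.subsingleton_congr]

end Local

section Socle

open Submodule

variable {R : Type u} [CommRing R] {I I' : Type u} [AddCommGroup I] [Module R I]
  [AddCommGroup I'] [Module R I'] {φ : I →ₗ[R] I'}

theorem exists_mem_torsionBySet_smul_eq [Module.Injective R I] {a : Ideal R} {x : R} {w : I}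
    (hw : w ∈ torsionBySet R I (a.colon {x})) : ∃ z ∈ torsionBySet R I a, x • z = w := by
  rw [mem_torsionBySet_iff] at hw
  let mulx : (R ⧸ a.colon {x}) →ₗ[R] (R ⧸ a) :=
    mapQ _ _ (LinearMap.toSpanSingleton R R x) fun _ hr ↦ mem_colon_singleton.mp hr
  have mulx_injective : Function.Injective mulx :=
    LinearMap.ker_eq_bot.mp <| ker_liftQ_eq_bot _ _ _ fun r hr ↦
      mem_colon_singleton.mpr ((Quotient.mk_eq_zero a).mp hr)
  obtain ⟨h, hh⟩ := Module.Injective.out mulx mulx_injective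
    (liftQ _ (LinearMap.toSpanSingleton R I w) fun r hr ↦ LinearMap.mem_ker.mpr (hw ⟨r, hr⟩))
  refine ⟨h (a.mkQ 1), (mem_torsionBySet_iff _ _).mpr fun r ↦ ?_, ?_⟩
  · rw [← map_smul, ← map_smul, mkQ_apply, (Quotient.mk_eq_zero a).mpr, map_zero]
    exact a.mul_mem_right 1 r.2
  · have h_x : h (a.mkQ ((1 : R) • x)) = (1 : R) • w := hh (mkQ _ 1)
    rwa [one_smul, one_smul, ← mul_one x, ← smul_eq_mul, map_smul, map_smul] at h_x

theorem TorsionSurjective.of_lt [Module.Injective R I] {a : Ideal R}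
    (ha : ∀ b > a, TorsionSurjective φ b)
    (h : ∀ y ∈ torsionBySet R I' a, ∃ x ∉ a, x • y ∈ (torsionBySet R I (a.colon {x})).map φ) :
    TorsionSurjective φ a := by
  intro y hy
  obtain ⟨x, hx, w, hw, hwy⟩ := h y hy
  obtain ⟨z, hz, rfl⟩ := exists_mem_torsionBySet_smul_eq hw
  have le_torsionOf : a ⊔ Ideal.span {x} ≤ Ideal.torsionOf R I' (y - φ z) := by
    refine sup_le (fun r hr ↦ ?_) ((Ideal.span_singleton_le_iff_mem _).mpr ?_)
    · rw [Ideal.mem_torsionOf_iff, smul_sub, ← map_smul,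
        (mem_torsionBySet_iff _ _).mp hy ⟨r, hr⟩, (mem_torsionBySet_iff _ _).mp hz ⟨r, hr⟩,
        map_zero, sub_zero]
    · rw [Ideal.mem_torsionOf_iff, smul_sub, ← map_smul, hwy, sub_self]
  obtain ⟨z', hz', hzz'⟩ := ha _ (left_lt_sup.mpr (by simpa using hx))
    ((mem_torsionBySet_iff _ _).mpr fun r ↦ le_torsionOf r.2)
  refine ⟨z + z', add_mem hz (torsionBySet_le_torsionBySet_of_subset ?_ hz'), ?_⟩
  · exact (le_sup_left : a ≤ _)
  · rw [map_add, hzz', add_sub_cancel]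

theorem torsionSurjective_of_forall_isPrime [IsNoetherianRing R] [Module.Injective R I]
    (h : ∀ (p : Ideal R) [p.IsPrime], ∀ y ∈ torsionBySet R I' p,
      ∃ x ∉ p, x • y ∈ (torsionBySet R I p).map φ) (a : Ideal R) : TorsionSurjective φ a := by
  induction a using WellFoundedGT.induction with
  | ind a ih =>
  by_cases ha : a = ⊤
  · rintro y hy
    rw [ha, top_coe, torsionBySet_univ] at hy
    exact (mem_bot R).mp hy ▸ zero_mem _
  refine .of_lt ih fun y hy ↦ ?_
  by_cases hp : a.IsPrime
  · obtain ⟨x, hx, hxy⟩ := h a y hy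
    refine ⟨x, hx, map_mono (torsionBySet_le_torsionBySet_of_subset fun r hr ↦ ?_) hxy⟩
    exact (hp.mem_or_mem (mem_colon_singleton.mp hr)).resolve_right hx
  · obtain ⟨x, hx, b, hb, hxb⟩ := (Ideal.not_isPrime_iff.mp hp).resolve_left ha
    have hlt : a < a.colon {x} := Ideal.le_colon.lt_of_not_ge fun hle ↦
      hb (hle (by rwa [mem_colon_singleton, smul_eq_mul, mul_comm]))
    refine ⟨x, hx, ih _ hlt ?_⟩
    rw [mem_torsionBySet_iff] at hy ⊢
    exact fun r ↦ (smul_smul _ _ _).trans (hy ⟨_, mem_colon_singleton.mp r.2⟩)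

theorem surjective_of_torsionSurjective_bot (h : TorsionSurjective φ ⊥) :
    Function.Surjective φ := fun y ↦
  have ⟨z, _, hz⟩ := h (show y ∈ torsionBySet R I' (⊥ : Ideal R) by simp)
  ⟨z, hz⟩

theorem injective_of_exact_of_torsionSurjective [Module.Injective R I] {H : Type u}
    [AddCommGroup H] [Module R H] {f : H →ₗ[R] I} (hf : Function.Injective f)
    (hfφ : Function.Exact f φ) (h : ∀ a : Ideal R, TorsionSurjective φ a) :
    Module.Injective R H := by
  refine Module.Baer.injective fun a g ↦ ?_
  obtain ⟨k, hk⟩ := Module.Baer.of_injective ‹_› a (f ∘ₗ g)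
  have hk (r : a) : (r : R) • k 1 = f (g r) := by
    rw [← map_smul, smul_eq_mul, mul_one]
    exact hk r r.2
  obtain ⟨z, hz, hzk⟩ := h a (x := φ (k 1)) <| (mem_torsionBySet_iff _ _).mpr fun r ↦ by
    rw [← map_smul, hk, hfφ.apply_apply_eq_zero]
  rw [SetLike.mem_coe, mem_torsionBySet_iff] at hz
  obtain ⟨t, ht⟩ := (hfφ (k 1 - z)).mp (by rw [map_sub, hzk, sub_self])
  refine ⟨LinearMap.toSpanSingleton R H t, fun r hr ↦ hf ?_⟩
  rw [LinearMap.toSpanSingleton_apply, map_smul, ht, smul_sub, hk ⟨r, hr⟩, hz ⟨r, hr⟩, sub_zero]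

variable {p : Ideal R} [p.IsPrime] {A : Type*} [CommRing A] [Algebra R A]
  [IsLocalization.AtPrime A p] [IsLocalRing A]

theorem mem_torsionBySet_maximalIdeal_iff {N : Type*} [AddCommGroup N] [Module R N] [Module A N]
    [IsScalarTower R A N] {y : N} :
    y ∈ torsionBySet A N (IsLocalRing.maximalIdeal A) ↔ ∀ r ∈ p, r • y = 0 := by
  rw [← IsLocalization.AtPrime.map_eq_maximalIdeal p A, Ideal.map, Ideal.span,
    ← torsionBySet_eq_torsionBySet_span, mem_torsionBySet_iff]
  simp

theorem exists_smul_mem_map_torsionBySet [IsNoetherianRing R] {Iₚ Iₚ' : Type*} [AddCommGroup Iₚ]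
    [Module R Iₚ] [Module A Iₚ] [IsScalarTower R A Iₚ] [AddCommGroup Iₚ'] [Module R Iₚ']
    [Module A Iₚ'] [IsScalarTower R A Iₚ'] {f : I →ₗ[R] Iₚ} {f' : I' →ₗ[R] Iₚ'}
    [IsLocalizedModule p.primeCompl f] [IsLocalizedModule p.primeCompl f'] {φₚ : Iₚ →ₗ[A] Iₚ'}
    (hφₚ : ∀ z, φₚ (f z) = f' (φ z)) (h : TorsionSurjective φₚ (IsLocalRing.maximalIdeal A))
    {y : I'} (hy : y ∈ torsionBySet R I' p) :
    ∃ x ∉ p, x • y ∈ (torsionBySet R I p).map φ := by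
  rw [mem_torsionBySet_iff] at hy
  obtain ⟨e, he, hey⟩ := h <| (mem_torsionBySet_maximalIdeal_iff (p := p) (y := f' y)).mpr
    fun r hr ↦ by rw [← map_smul, hy ⟨r, hr⟩, map_zero]
  rw [SetLike.mem_coe, mem_torsionBySet_maximalIdeal_iff (p := p)] at he
  obtain ⟨⟨z, s⟩, hs : s • e = f z⟩ := IsLocalizedModule.surj p.primeCompl f e
  obtain ⟨u, hu : u • φ z = u • s • y⟩ := (IsLocalizedModule.eq_iff_exists p.primeCompl f').mp <|
    show f' (φ z) = f' (s • y) by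
      rw [← hφₚ, ← hs, Submonoid.smul_def, Submonoid.smul_def, map_smul f', ← hey]
      exact φₚ.map_smul_of_tower (s : R) e
  obtain ⟨v, hv⟩ := Module.Finite.exists_smul_of_comp_eq_of_isLocalizedModule p.primeCompl f
    (LinearMap.toSpanSingleton R I z ∘ₗ p.subtype) 0 <| LinearMap.ext fun r ↦ by
      change f ((r : R) • z) = f 0
      rw [map_smul, ← hs, smul_comm, he r r.2, smul_zero, map_zero]
  refine ⟨v * (u * s), (v * (u * s)).2, (v * u) • z, (mem_torsionBySet_iff _ _).mpr fun r ↦ ?_, ?_⟩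
  · rw [mul_comm, mul_smul, smul_comm, smul_comm _ v]
    exact congr(u • $hv r).trans (by simp)
  · rw [φ.map_smul_of_tower, mul_smul, hu, smul_smul, smul_smul, mul_assoc]
    rfl

end Socle

section Chouinard

open IsLocalRing

variable {R : Type u} [CommRing R]

/-- Localization of modules at a prime ideal, as a functor. -/
noncomputable abbrev localizationAt (p : Ideal R) [p.IsPrime] :
    ModuleCat.{u} R ⥤ ModuleCat.{u} (Localization.AtPrime p) :=
  ModuleCat.localizedModuleFunctor p.primeCompl

/-- The residue field of `R` at a prime ideal `p`, as a module over `R` localized at `p`. -/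
noncomputable abbrev residueFieldAt (p : Ideal R) [p.IsPrime] :
    ModuleCat.{u} (Localization.AtPrime p) :=
  ModuleCat.of _ (ResidueField (Localization.AtPrime p))

theorem modWidth_localizationAt_obj (p : Ideal R) [p.IsPrime] (M : ModuleCat.{u} R) :
    modWidth (Localization.AtPrime p) ((localizationAt p).obj M) =
      modWidth (Localization.AtPrime p) (LocalizedModule p.primeCompl M) :=
  modWidth_congr (Shrink.linearEquiv (Localization.AtPrime p) (LocalizedModule p.primeCompl M))

variable [IsNoetherianRing R]

theorem injective_localizationAt_obj (p : Ideal R) [p.IsPrime] (I : ModuleCat.{u} R)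
    [Injective I] : Injective ((localizationAt p).obj I) := by
  have : Module.Injective R I := Module.injective_module_of_injective_object R I
  have : Module.Injective (Localization.AtPrime p) (I.localizedModule p.primeCompl) :=
    Module.injective_of_isLocalizedModule p.primeCompl (I.localizedModuleMkLinearMap p.primeCompl)
  exact Module.injective_object_of_injective_module (Localization.AtPrime p)
    (I.localizedModule p.primeCompl)

theorem extVanishesBelow_localizationAt_obj {p : Ideal R} [p.IsPrime] {d : ℕ}
    (hd : d ≤ ringDepth (Localization.AtPrime p)) (I : ModuleCat.{u} R) [Injective I] :
    ExtVanishesBelow d ((localizationAt p).obj I) (residueFieldAt p) :=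
  have := injective_localizationAt_obj p I
  extVanishesBelow_residueField hd _

theorem torsionSurjective_of_injective_precomp_localizationAt {I I' : ModuleCat.{u} R}
    [Injective I] [Injective I'] {φ : I ⟶ I'}
    (h : ∀ (p : Ideal R) [p.IsPrime] (d : ℕ), d ≤ ringDepth (Localization.AtPrime p) →
      Function.Injective ((Ext.mk₀ ((localizationAt p).map φ)).precomp (residueFieldAt p)
        (zero_add d))) (a : Ideal R) : TorsionSurjective φ.hom a := by
  have : Module.Injective R I := Module.injective_module_of_injective_object R I
  refine torsionSurjective_of_forall_isPrime (fun p _ y hy ↦ ?_) a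
  have := injective_localizationAt_obj p I
  have := injective_localizationAt_obj p I'
  have : IsNoetherianRing (Localization.AtPrime p) :=
    IsLocalization.isNoetherianRing p.primeCompl _ inferInstance
  obtain ⟨d, hd, torsionSurjective⟩ :=
    exists_le_ringDepth_torsionSurjective (Localization.AtPrime p)
  let φₚ := (ModuleCat.localizedModuleMap p.primeCompl φ).hom
  have surj : TorsionSurjective φₚ (maximalIdeal (Localization.AtPrime p)) :=
    torsionSurjective (E := (localizationAt p).obj I) (E' := (localizationAt p).obj I') (h p d hd)
  exact exists_smul_mem_map_torsionBySet (f := I.localizedModuleMkLinearMap p.primeCompl)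
    (f' := I'.localizedModuleMkLinearMap p.primeCompl) (φₚ := φₚ)
    (fun z ↦ IsLocalizedModule.map_apply p.primeCompl _ _ φ.hom z) surj hy

theorem injective_of_subsingleton_ext {S : ShortComplex (ModuleCat.{u} R)} (hS : S.ShortExact)
    [Injective S.X₂] [Injective S.X₃]
    (h : ∀ (p : Ideal R) [p.IsPrime] (i : ℕ), (i + 1 : ℕ) ≤ ringDepth (Localization.AtPrime p) →
      Subsingleton (Ext ((localizationAt p).obj S.X₁) (residueFieldAt p) i)) :
    Injective S.X₁ := by
  have : Module.Injective R S.X₂ := Module.injective_module_of_injective_object R _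
  have : Module.Injective R S.X₁ := injective_of_exact_of_torsionSurjective
    hS.moduleCat_injective_f ((ShortComplex.ShortExact.moduleCat_exact_iff_function_exact _).mp
      hS.exact) <|
    torsionSurjective_of_injective_precomp_localizationAt fun p _ d hd ↦
      injective_precomp_mk₀_of_shortExact (hS.map_of_exact (localizationAt p)) fun i hi ↦
        h p i (hi ▸ hd)
  exact Module.injective_object_of_injective_module R S.X₁

theorem hasInjectiveDimensionLE_of_subsingleton_ext {n : ℕ} {H : ModuleCat.{u} R}
    (hH : HasInjectiveDimensionLE H (n + 1))
    (h : ∀ (p : Ideal R) [p.IsPrime] (i : ℕ),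
      (i + n + 1 : ℕ) ≤ ringDepth (Localization.AtPrime p) →
        Subsingleton (Ext ((localizationAt p).obj H) (residueFieldAt p) i)) :
    HasInjectiveDimensionLE H n := by
  induction n generalizing H with
  | zero =>
    obtain ⟨S, hS, rfl, _⟩ := exists_shortExact_injective H
    have : Injective S.X₃ := injective_iff_hasInjectiveDimensionLT_one.mpr <|
      (hS.hasInjectiveDimensionLT_X₃_iff 0 ‹_›).mpr hH
    exact injective_iff_hasInjectiveDimensionLT_one.mp (injective_of_subsingleton_ext hS h)
  | succ n ih =>
    obtain ⟨S, hS, rfl, _⟩ := exists_shortExact_injective H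
    refine (hS.hasInjectiveDimensionLT_X₃_iff n ‹_›).mp <|
      ih ((hS.hasInjectiveDimensionLT_X₃_iff (n + 1) ‹_›).mpr hH) fun p _ i hi ↦ ?_
    have := extVanishesBelow_localizationAt_obj hi S.X₂ i (by omega)
    exact ((IsExtension.of_shortExact hS).map (localizationAt p)).subsingleton_ext_right
      fun j hj ↦ h p j (by convert hi using 2; omega)

theorem GorensteinInjectiveObject.isZero_of_subsingleton_ext {M : ModuleCat.{u} R}
    (hM : GorensteinInjectiveObject M)
    (h : ∀ (p : Ideal R) [p.IsPrime] (i : ℕ), i ≤ ringDepth (Localization.AtPrime p) →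
      Subsingleton (Ext ((localizationAt p).obj M) (residueFieldAt p) i)) : IsZero M := by
  obtain ⟨B, I, _, ⟨f, g, w, hS⟩, hB⟩ := hM.exists_injective_extension
  obtain ⟨B', I', _, ⟨f', g', w', hS'⟩, hB'⟩ := hB.exists_injective_extension
  have surj : Function.Surjective (g' ≫ f).hom := surjective_of_torsionSurjective_bot <|
    torsionSurjective_of_injective_precomp_localizationAt (fun p _ d hd ↦ by
      have : Subsingleton (Ext ((ShortComplex.mk f g w).map (localizationAt p)).X₃
        (residueFieldAt p) d) := h p d hd
      rw [Functor.map_comp]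
      refine injective_precomp_mk₀_comp
        (injective_precomp_mk₀_of_shortExact (hS'.map_of_exact (localizationAt p)) fun i hi ↦ ?_)
        (injective_precomp_mk₀_f_of_shortExact (hS.map_of_exact (localizationAt p)))
      exact hB'.extVanishesBelow_map
        (fun I _ ↦ extVanishesBelow_localizationAt_obj hd I) i (by omega)) ⊥
  have : Epi (g' ≫ f) := (ModuleCat.epi_iff_surjective _).mpr surj
  have : Epi f := epi_of_epi g' f
  have := hS.epi_g
  exact IsZero.of_epi_eq_zero g (zero_of_epi_comp f w)

theorem GidLE.of_succ_of_subsingleton_ext {n : ℕ} {M : ModuleCat.{u} R} (hM : GidLE (n + 1) M)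
    (h : ∀ (p : Ideal R) [p.IsPrime] (i : ℕ),
      (i + n + 1 : ℕ) ≤ ringDepth (Localization.AtPrime p) →
        Subsingleton (Ext ((localizationAt p).obj M) (residueFieldAt p) i)) : GidLE n M := by
  obtain ⟨B, H, hB, hH, hBHM⟩ := hM.exists_approximation
  refine .of_approximation hB (hasInjectiveDimensionLE_of_subsingleton_ext hH fun p _ i hi ↦ ?_)
    hBHM
  have := hB.extVanishesBelow_map (fun I _ ↦ extVanishesBelow_localizationAt_obj hi I) i (by omega)
  have := h p i hi
  exact (hBHM.map (localizationAt p)).subsingleton_ext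

theorem GidLE.ringDepth_le_add_modWidth {g : ℕ} {M : ModuleCat.{u} R} (hM : GidLE g M)
    (p : Ideal R) [p.IsPrime] :
    ringDepth (Localization.AtPrime p) ≤
      modWidth (Localization.AtPrime p) (LocalizedModule p.primeCompl M) + g := by
  rw [← modWidth_localizationAt_obj]
  refine ENat.forall_natCast_le_iff_le.mp fun d hd ↦ ?_
  obtain hdg | hgd := le_total d g
  · exact (Nat.cast_le.mpr hdg).trans le_add_self
  obtain ⟨e, rfl⟩ := Nat.exists_eq_add_of_le' hgd
  have : e ≤ modWidth (Localization.AtPrime p) ((localizationAt p).obj M) :=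
    natCast_le_modWidth_iff.mpr <|
      hM.extVanishesBelow_map fun I _ ↦ extVanishesBelow_localizationAt_obj hd I
  exact (Nat.cast_add e g).trans_le (add_le_add_left this _)

theorem GidLE.exists_modWidth_add_le_ringDepth {g : ℕ} {M : ModuleCat.{u} R} [Nontrivial M]
    (hM : GidLE g M) (hg : ∀ n < g, ¬ GidLE n M) :
    ∃ (p : Ideal R) (_ : p.IsPrime),
      modWidth (Localization.AtPrime p) (LocalizedModule p.primeCompl M) < ⊤ ∧
      modWidth (Localization.AtPrime p) (LocalizedModule p.primeCompl M) + g ≤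
        ringDepth (Localization.AtPrime p) := by
  obtain ⟨p, hp, i, hi, hne⟩ : ∃ (p : Ideal R) (_ : p.IsPrime) (i : ℕ),
      (i + g : ℕ) ≤ ringDepth (Localization.AtPrime p) ∧
        ¬ Subsingleton (Ext ((localizationAt p).obj M) (residueFieldAt p) i) := by
    by_contra h
    push Not at h
    cases g with
    | zero =>
      exact not_subsingleton M
        (ModuleCat.subsingleton_of_isZero (hM.isZero_of_subsingleton_ext h))
    | succ n => exact hg n n.lt_succ_self (hM.of_succ_of_subsingleton_ext h)
  have := modWidth_localizationAt_obj p M ▸ modWidth_le_of_not_subsingleton_ext hne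
  exact ⟨p, hp, this.trans_lt (ENat.natCast_lt_top i),
    (add_le_add_left this _).trans (by exact_mod_cast hi)⟩

end Chouinard

theorem gid_eq_sup_depth_sub_width
    (R : Type u) [CommRing R] [IsNoetherianRing R]
    (M : Type u) [AddCommGroup M] [Module R M] [Nontrivial M]
    (g : ℕ) (hg : gid R M = g) :
    (∀ (p : Ideal R) [p.IsPrime],
        modWidth (Localization.AtPrime p) (LocalizedModule p.primeCompl M) < ⊤ →
          ringDepth (Localization.AtPrime p) -
            modWidth (Localization.AtPrime p) (LocalizedModule p.primeCompl M) ≤ (g : ℕ∞)) ∧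
      (∃ (p : Ideal R) (_ : p.IsPrime),
        modWidth (Localization.AtPrime p) (LocalizedModule p.primeCompl M) < ⊤ ∧
          ringDepth (Localization.AtPrime p) -
            modWidth (Localization.AtPrime p) (LocalizedModule p.primeCompl M) = (g : ℕ∞)) := by
  have gid_le : GidLE g (ModuleCat.of R M) := gidLE_of_gid_eq hg
  have not_gid_le : ∀ n < g, ¬ GidLE n (ModuleCat.of R M) := fun n hn h ↦
    (Nat.cast_lt.mpr hn).not_ge (hg ▸ gid_le_of_gidLE h)
  have depth_le := gid_le.ringDepth_le_add_modWidth
  have : Nontrivial (ModuleCat.of R M) := ‹Nontrivial M›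
  obtain ⟨p, hp, width_lt_top, le_depth⟩ := gid_le.exists_modWidth_add_le_ringDepth not_gid_le
  refine ⟨fun p _ _ ↦ tsub_le_iff_left.mpr (depth_le p), p, hp, width_lt_top, ?_⟩
  exact ((depth_le p).antisymm le_depth) ▸
    (ENat.addLECancellable_of_lt_top width_lt_top).add_tsub_cancel_left
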